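/- (Sensitivity to robotic uncertainty) Fix vehicle length l > 0, positive constants T, L, τ, speed v > 0 and headway η > 0 with v·η > l. Then the collision probability σₒ ↦ p(v,η;σₒ) = Φ((l − v·η)/(v·σₒ·√η)) is strictly increasing in the uncertainty parameter σₒ on (0,∞), and consequently the collision-inclusive capacity s(v,η) = 1/(η + (T·L)/(τ·v)·p(v,η;σₒ)) is strictly decreasing in σₒ. -/

import Mathlib

open MeasureTheory Real Filter Set

/-- The standard Gaussian probability density function. -/
noncomputable def stdGaussianPDF (x : ℝ) : ℝ :=
  (Real.sqrt (2 * Real.pi))⁻¹ * Real.exp (-x ^ 2 / 2)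

/-- The standard Gaussian cumulative distribution function Φ. -/
noncomputable def stdGaussianCDF (x : ℝ) : ℝ :=
  ∫ t in Set.Iic x, stdGaussianPDF t

/-- The per-time-step collision probability p(v,η) = Φ((l − v·η)/(v·σₒ·√η)). -/
noncomputable def collisionProb (l σₒ v η : ℝ) : ℝ :=
  stdGaussianCDF ((l - v * η) / (v * σₒ * Real.sqrt η))

/-- The collision-inclusive capacity s(v,η) = 1/(η + (T·L)/(τ·v)·p(v,η)). -/
noncomputable def cic (l σₒ T L τ v η : ℝ) : ℝ :=
  1 / (η + (T * L) / (τ * v) * collisionProb l σₒ v η)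


theorem div_strictMonoOn_of_neg {𝕜 : Type*} [Field 𝕜] [LinearOrder 𝕜] [IsStrictOrderedRing 𝕜]
    {a : 𝕜} (ha : a < 0) : StrictMonoOn (fun x => a / x) (Ioi 0) := by
  intro x hx y _ hxy
  have h : -a / y < -a / x := div_lt_div_of_pos_left (neg_pos.2 ha) hx hxy
  rwa [neg_div, neg_div, neg_lt_neg_iff] at h

theorem strictMono_setIntegral_Iic {α : Type*} [TopologicalSpace α] [LinearOrder α]
    [OrderClosedTopology α] [DenselyOrdered α] [MeasurableSpace α] [OpensMeasurableSpace α]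
    {μ : Measure α} [μ.IsOpenPosMeasure] {f : α → ℝ}
    (hf : ∀ x, IntegrableOn f (Iic x) μ) (hpos : ∀ x, 0 < f x) :
    StrictMono fun x => ∫ t in Iic x, f t ∂μ := by
  intro a b hab
  have hsupp : Function.support f = univ := Function.support_eq_univ fun x => (hpos x).ne'
  have hIoc : 0 < ∫ t in Ioc a b, f t ∂μ := by
    rw [setIntegral_pos_iff_support_of_nonneg_ae (.of_forall fun x => (hpos x).le)
      ((hf b).mono_set Ioc_subset_Iic_self), hsupp, univ_inter]
    exact (isOpen_Ioo.measure_pos μ (nonempty_Ioo.2 hab)).trans_le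
      (measure_mono Ioo_subset_Ioc_self)
  calc
    ∫ t in Iic a, f t ∂μ < ∫ t in Iic a, f t ∂μ + ∫ t in Ioc a b, f t ∂μ :=
      lt_add_of_pos_right _ hIoc
    _ = ∫ t in Iic b, f t ∂μ := by
      rw [← setIntegral_union (Iic_disjoint_Ioc le_rfl) measurableSet_Ioc (hf a)
        ((hf b).mono_set Ioc_subset_Iic_self), Iic_union_Ioc_eq_Iic hab.le]

theorem stdGaussianPDF_eq_gaussianPDFReal :
    stdGaussianPDF = ProbabilityTheory.gaussianPDFReal 0 1 := by
  ext x
  simp [stdGaussianPDF, ProbabilityTheory.gaussianPDFReal]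

theorem stdGaussianPDF_pos (x : ℝ) : 0 < stdGaussianPDF x := by
  rw [stdGaussianPDF_eq_gaussianPDFReal]
  exact ProbabilityTheory.gaussianPDFReal_pos 0 1 x one_ne_zero

theorem integrable_stdGaussianPDF : Integrable stdGaussianPDF := by
  rw [stdGaussianPDF_eq_gaussianPDFReal]
  exact ProbabilityTheory.integrable_gaussianPDFReal 0 1

theorem stdGaussianCDF_strictMono : StrictMono stdGaussianCDF :=
  strictMono_setIntegral_Iic (fun _ => integrable_stdGaussianPDF.integrableOn) stdGaussianPDF_pos

theorem stdGaussianCDF_nonneg (x : ℝ) : 0 ≤ stdGaussianCDF x :=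
  integral_nonneg fun t => (stdGaussianPDF_pos t).le

theorem collisionProb_nonneg (l σₒ v η : ℝ) : 0 ≤ collisionProb l σₒ v η :=
  stdGaussianCDF_nonneg _

theorem collisionProb_strictMonoOn {l v η : ℝ} (hv : 0 < v) (hη : 0 < η)
    (hvηl : l < v * η) : StrictMonoOn (fun σₒ => collisionProb l σₒ v η) (Ioi 0) := by
  have hscale : 0 < v * √η := by positivity
  have hgap : (l - v * η) / (v * √η) < 0 := div_neg_of_neg_of_pos (sub_neg.2 hvηl) hscale
  have hfactor (σₒ : ℝ) :
      (l - v * η) / (v * σₒ * √η) = (l - v * η) / (v * √η) / σₒ := by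
    rw [div_div, mul_right_comm]
  simp only [collisionProb, hfactor]
  exact stdGaussianCDF_strictMono.comp_strictMonoOn (div_strictMonoOn_of_neg hgap)

theorem cic_lt_cic_of_collisionProb_lt {l₁ l₂ σ₁ σ₂ T L τ v η : ℝ} (hη : 0 < η)
    (hc : 0 < T * L / (τ * v)) (hp : collisionProb l₁ σ₁ v η < collisionProb l₂ σ₂ v η) :
    cic l₂ σ₂ T L τ v η < cic l₁ σ₁ T L τ v η := by
  have hp₁ : 0 ≤ collisionProb l₁ σ₁ v η := collisionProb_nonneg l₁ σ₁ v η
  unfold cic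
  gcongr

/-- sensitivity to robotic uncertainty: when v·η > l, the
collision probability is strictly increasing in σₒ on (0,∞), and consequently
the collision-inclusive capacity is strictly decreasing in σₒ on (0,∞). -/
theorem sensitivity_robotic_uncertainty (l T L τ v η : ℝ)
    (hl : 0 < l) (hT : 0 < T) (hL : 0 < L) (hτ : 0 < τ)
    (hv : 0 < v) (hη : 0 < η) (hvηl : l < v * η) :
    StrictMonoOn (fun σₒ => collisionProb l σₒ v η) (Set.Ioi 0) ∧
    StrictAntiOn (fun σₒ => cic l σₒ T L τ v η) (Set.Ioi 0) := by
  have hp : StrictMonoOn (fun σₒ => collisionProb l σₒ v η) (Ioi 0) :=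
    collisionProb_strictMonoOn hv hη hvηl
  have hc : 0 < T * L / (τ * v) := by positivity
  exact ⟨hp, fun _ h₁ _ h₂ hlt => cic_lt_cic_of_collisionProb_lt hη hc (hp h₁ h₂ hlt)⟩
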